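/- Let η : ℝ³ → ℝ³ be a C² map whose Jacobian ∇η(x) (entries ∂_l η_i) is invertible at every x, let A := (∇η)⁻¹, and define ∂_i^η g := ∑_k A_{ki} ∂_k g. Then for every C² function f : ℝ³ → ℝ and all indices i, j ∈ {1,2,3}, the transformed derivatives commute: ∂_j^η(∂_i^η f) = ∂_i^η(∂_j^η f) at every point. -/

import Mathlib

open scoped Matrix BigOperators

/-- Partial derivative `∂_l f` of a scalar function on `ℝ³`. -/
noncomputable def pd (f : (Fin 3 → ℝ) → ℝ) (l : Fin 3) (x : Fin 3 → ℝ) : ℝ :=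
  fderiv ℝ f x (Pi.single l 1)

/-- Jacobian matrix `∇η` with entries `(∇η)_{il} = ∂_l η_i`. -/
noncomputable def Jac (η : (Fin 3 → ℝ) → Fin 3 → ℝ) (x : Fin 3 → ℝ) :
    Matrix (Fin 3) (Fin 3) ℝ :=
  Matrix.of fun i l => pd (fun y => η y i) l x

/-- Transformed derivative `∂_i^η g = ∑_k A_{ki} ∂_k g`, where `A = (∇η)⁻¹`. -/
noncomputable def Deta (η : (Fin 3 → ℝ) → Fin 3 → ℝ) (f : (Fin 3 → ℝ) → ℝ)
    (i : Fin 3) (x : Fin 3 → ℝ) : ℝ :=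
  ∑ k, (Jac η x)⁻¹ k i * pd f k x

/-!
At points where `∇η` is invertible, `∂_i^η` is differentiation along the vector field
`x ↦ (∇η x)⁻¹ e_i`, the pullback under `η` of the constant field `e_i`. Constant fields have
vanishing Lie bracket, pulling back preserves Lie brackets, and the Lie bracket of two fields acts
on functions as the commutator of the corresponding derivations.
-/

section Pullback

open VectorField
open scoped ContDiff

variable {𝕜 E F G : Type*} [NontriviallyNormedField 𝕜]
  [NormedAddCommGroup E] [NormedSpace 𝕜 E] [NormedAddCommGroup F] [NormedSpace 𝕜 F]
  [NormedAddCommGroup G] [NormedSpace 𝕜 G] {n : ℕ∞ω} {x : E}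

theorem fderiv_fderiv_apply_comm_of_lieBracket_eq_zero {f : E → G} {V W : E → E}
    (hn : minSmoothness 𝕜 2 ≤ n) (hf : ContDiffAt 𝕜 n f x)
    (hV : DifferentiableAt 𝕜 V x) (hW : DifferentiableAt 𝕜 W x)
    (hVW : lieBracket 𝕜 V W x = 0) :
    fderiv 𝕜 (fun y ↦ fderiv 𝕜 f y (W y)) x (V x) =
      fderiv 𝕜 (fun y ↦ fderiv 𝕜 f y (V y)) x (W x) := by
  rw [← sub_eq_zero, ← fderiv_apply_lieBracket hf hn hW hV, hVW, map_zero]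

variable [CompleteSpace E] {η : E → F}

theorem differentiableAt_pullback {V : F → F} (hη : ContDiffAt 𝕜 2 η x)
    (hη' : (fderiv 𝕜 η x).IsInvertible) (hV : DifferentiableAt 𝕜 V (η x)) :
    DifferentiableAt 𝕜 (pullback 𝕜 η V) x := by
  have hinverse : DifferentiableAt 𝕜 (fun y ↦ (fderiv 𝕜 η y).inverse) x :=
    (hη'.contDiffAt_map_inverse.differentiableAt one_ne_zero).comp x
      ((hη.fderiv_right (m := 1) le_rfl).differentiableAt one_ne_zero)
  exact hinverse.clm_apply (hV.comp x (hη.differentiableAt two_ne_zero))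

theorem lieBracket_pullback_const_eq_zero (hn : minSmoothness 𝕜 2 ≤ n)
    (hη : ContDiffAt 𝕜 n η x) (v w : F) :
    lieBracket 𝕜 (pullback 𝕜 η fun _ ↦ v) (pullback 𝕜 η fun _ ↦ w) x = 0 := by
  rw [← pullback_lieBracket hn hη (differentiableAt_const v) (differentiableAt_const w)]
  simp [pullback, lieBracket]

theorem Deta_comm_general {f : E → G} (hn : minSmoothness 𝕜 2 ≤ n) (hη : ContDiffAt 𝕜 n η x)
    (hη' : (fderiv 𝕜 η x).IsInvertible) (hf : ContDiffAt 𝕜 n f x) (v w : F) :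
    fderiv 𝕜 (fun y ↦ fderiv 𝕜 f y (pullback 𝕜 η (fun _ ↦ w) y)) x
        (pullback 𝕜 η (fun _ ↦ v) x) =
      fderiv 𝕜 (fun y ↦ fderiv 𝕜 f y (pullback 𝕜 η (fun _ ↦ v) y)) x
        (pullback 𝕜 η (fun _ ↦ w) x) :=
  have hη₂ : ContDiffAt 𝕜 2 η x := hη.of_le (le_minSmoothness.trans hn)
  fderiv_fderiv_apply_comm_of_lieBracket_eq_zero hn hf
    (differentiableAt_pullback hη₂ hη' (differentiableAt_const v))
    (differentiableAt_pullback hη₂ hη' (differentiableAt_const w))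
    (lieBracket_pullback_const_eq_zero hn hη v w)

end Pullback

section MulVec

variable {𝕜 ι : Type*} [NontriviallyNormedField 𝕜] [CompleteSpace 𝕜] [Fintype ι] [DecidableEq ι]
  {A : Matrix ι ι 𝕜} {L : (ι → 𝕜) →L[𝕜] ι → 𝕜}

theorem isInvertible_of_eq_mulVec (hA : IsUnit A) (hL : ∀ v, L v = A *ᵥ v) :
    L.IsInvertible := by
  have hdet : IsUnit A.det := (Matrix.isUnit_iff_isUnit_det A).1 hA
  refine .of_inverse (g := (Matrix.toLin' A⁻¹).toContinuousLinearMap) ?_ ?_ <;> ext1 v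
  · simp [hL, Matrix.mul_nonsing_inv A hdet]
  · simp [hL, Matrix.nonsing_inv_mul A hdet]

theorem inverse_apply_of_eq_mulVec (hA : IsUnit A) (hL : ∀ v, L v = A *ᵥ v) (w : ι → 𝕜) :
    L.inverse w = A⁻¹ *ᵥ w := by
  have hdet : IsUnit A.det := (Matrix.isUnit_iff_isUnit_det A).1 hA
  rw [(isInvertible_of_eq_mulVec hA hL).inverse_apply_eq, hL, Matrix.mulVec_mulVec,
    Matrix.mul_nonsing_inv A hdet, Matrix.one_mulVec]

end MulVec

section Coordinates

variable {η : (Fin 3 → ℝ) → Fin 3 → ℝ} {x : Fin 3 → ℝ}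

theorem fderiv_apply_eq_sum_pd (f : (Fin 3 → ℝ) → ℝ) (x v : Fin 3 → ℝ) :
    fderiv ℝ f x v = ∑ k, v k * pd f k x := by
  conv_lhs => rw [← (Pi.basisFun ℝ (Fin 3)).sum_repr v]
  simp only [map_sum, map_smul, Pi.basisFun_repr, Pi.basisFun_apply, smul_eq_mul, pd]

theorem fderiv_apply_eq_Jac_mulVec (hη : DifferentiableAt ℝ η x) (v : Fin 3 → ℝ) :
    fderiv ℝ η x v = Jac η x *ᵥ v := by
  ext i
  calc fderiv ℝ η x v i = fderiv ℝ (fun y ↦ η y i) x v := by rw [fderiv_apply hη]; rfl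
    _ = ∑ l, v l * pd (fun y ↦ η y i) l x := fderiv_apply_eq_sum_pd _ x v
    _ = (Jac η x *ᵥ v) i := by
      simp only [Jac, Matrix.mulVec, dotProduct, Matrix.of_apply, mul_comm]

theorem Deta_eq_fderiv_pullback (hη : DifferentiableAt ℝ η x) (hinv : IsUnit (Jac η x))
    (f : (Fin 3 → ℝ) → ℝ) (i : Fin 3) :
    Deta η f i x = fderiv ℝ f x (VectorField.pullback ℝ η (fun _ ↦ Pi.single i 1) x) := by
  rw [VectorField.pullback, fderiv_apply_eq_sum_pd,
    inverse_apply_of_eq_mulVec hinv (fderiv_apply_eq_Jac_mulVec hη), Matrix.mulVec_single_one]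
  rfl

end Coordinates

/-- Third commutator identity of Lemma 2.1: the transformed derivatives commute,
`∂_j^η ∂_i^η f = ∂_i^η ∂_j^η f`. -/
theorem Deta_comm
    (η : (Fin 3 → ℝ) → Fin 3 → ℝ) (hη : ContDiff ℝ 2 η)
    (hinv : ∀ x, IsUnit (Jac η x))
    (f : (Fin 3 → ℝ) → ℝ) (hf : ContDiff ℝ 2 f)
    (i j : Fin 3) (x : Fin 3 → ℝ) :
    Deta η (fun y => Deta η f i y) j x = Deta η (fun y => Deta η f j y) i x := by
  have hη₁ : Differentiable ℝ η := hη.differentiable two_ne_zero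
  have hη' : (fderiv ℝ η x).IsInvertible :=
    isInvertible_of_eq_mulVec (hinv x) (fderiv_apply_eq_Jac_mulVec (hη₁ x))
  simp only [fun g k y ↦ Deta_eq_fderiv_pullback (hη₁ y) (hinv y) g k]
  exact Deta_comm_general (by simp) hη.contDiffAt hη' hf.contDiffAt _ _
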